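/- Let 0 < λ and let η ∈ (−λ, λ). Then the principal-value integral lim_{ε→0⁺} [ ∫_{−λ}^{η−ε} μ/((μ − η)·√(λ² − μ²)) dμ + ∫_{η+ε}^{λ} μ/((μ − η)·√(λ² − μ²)) dμ ] exists and equals π. Equivalently, the finite Hilbert transform of the odd extension of the genus-0 condensate density of states u(μ) = μ/(π·√(λ² − μ²)) equals the constant 1/π on (−λ, λ). -/

import Mathlib

/-!
Write `s(μ) = √(λ² - μ²)` and `S = √(λ² - η²)`. Away from `η` the integrand has the elementary
primitive `F(μ) = arcsin (μ/λ) - (η/S) (log (λ² - ημ + S s(μ)) - log |μ - η|)`, which stays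
continuous up to `±λ` (`condensatePrimitive`, `integral_eq_condensatePrimitive`). At the endpoints
the logarithmic parts both equal `log λ`, so `F(λ) - F(-λ) = π`. At `η ± ε` the singular terms
`log |±ε|` coincide, and what remains of `F(η - ε) - F(η + ε)` is a difference of values of a
function continuous at `η`, which tends to `0`.
-/

/-- The part of the primitive that is regular at `η`:
`arcsin (x/λ) - (η/S) log (λ² - ηx + S √(λ² - x²))`, with `S = √(λ² - η²)`. -/
noncomputable def condensateRegular (lam η x : ℝ) : ℝ :=
  Real.arcsin (x / lam) - η / Real.sqrt (lam ^ 2 - η ^ 2) *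
    Real.log (lam ^ 2 - η * x + Real.sqrt (lam ^ 2 - η ^ 2) * Real.sqrt (lam ^ 2 - x ^ 2))

/-- A primitive of `x / ((x - η) √(λ² - x²))` on each side of `η`; since `Real.log x = log |x|`,
the single formula serves both sides. -/
noncomputable def condensatePrimitive (lam η x : ℝ) : ℝ :=
  condensateRegular lam η x + η / Real.sqrt (lam ^ 2 - η ^ 2) * Real.log (x - η)

lemma condensate_log_arg_pos {lam η x : ℝ} (hη : η ∈ Set.Ioo (-lam) lam)
    (hx : x ∈ Set.Icc (-lam) lam) :
    0 < lam ^ 2 - η * x +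
      Real.sqrt (lam ^ 2 - η ^ 2) * Real.sqrt (lam ^ 2 - x ^ 2) := by
  obtain ⟨h1, h2⟩ := hη
  obtain ⟨h3, h4⟩ := hx
  have : 0 < lam ^ 2 - η * x := by
    rcases le_total 0 x with h | h
    · nlinarith
    · nlinarith
  positivity

lemma hasDerivAt_arcsin_div {lam x : ℝ} (hlam : 0 < lam) (hx : x ∈ Set.Ioo (-lam) lam) :
    HasDerivAt (fun y => Real.arcsin (y / lam)) (1 / Real.sqrt (lam ^ 2 - x ^ 2)) x := by
  have h1 : x / lam ≠ -1 := by
    rw [Ne, div_eq_iff hlam.ne']; linarith [hx.1]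
  have h2 : x / lam ≠ 1 := by
    rw [Ne, div_eq_iff hlam.ne']; linarith [hx.2]
  have h := (Real.hasDerivAt_arcsin h1 h2).comp x ((hasDerivAt_id x).div_const lam)
  refine h.congr_deriv ?_
  have e : lam ^ 2 - x ^ 2 = lam ^ 2 * (1 - (x / lam) ^ 2) := by field_simp
  rw [e, Real.sqrt_mul (by positivity), Real.sqrt_sq hlam.le]
  rw [one_div_mul_one_div, mul_comm]

lemma hasDerivAt_condensatePrimitive {lam η x : ℝ} (hlam : 0 < lam)
    (hη : η ∈ Set.Ioo (-lam) lam) (hx : x ∈ Set.Ioo (-lam) lam) (hne : x ≠ η) :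
    HasDerivAt (condensatePrimitive lam η)
      (x / ((x - η) * Real.sqrt (lam ^ 2 - x ^ 2))) x := by
  have hN := condensate_log_arg_pos hη (Set.Ioo_subset_Icc_self hx)
  have hx2 : 0 < lam ^ 2 - x ^ 2 := by nlinarith [hx.1, hx.2]
  have hη2 : 0 < lam ^ 2 - η ^ 2 := by nlinarith [hη.1, hη.2]
  have hd : x - η ≠ 0 := sub_ne_zero.mpr hne
  have hs : HasDerivAt (fun y => Real.sqrt (lam ^ 2 - y ^ 2))
      (-(2 * x) / (2 * Real.sqrt (lam ^ 2 - x ^ 2))) x := by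
    refine HasDerivAt.sqrt ?_ hx2.ne'
    simpa using ((hasDerivAt_id x).pow 2).const_sub (lam ^ 2)
  have hNd : HasDerivAt (fun y => lam ^ 2 - η * y +
      Real.sqrt (lam ^ 2 - η ^ 2) * Real.sqrt (lam ^ 2 - y ^ 2))
      (-(η * 1) + Real.sqrt (lam ^ 2 - η ^ 2) *
        (-(2 * x) / (2 * Real.sqrt (lam ^ 2 - x ^ 2)))) x :=
    (((hasDerivAt_id x).const_mul η).const_sub (lam ^ 2)).add (hs.const_mul _)
  have h := ((hasDerivAt_arcsin_div hlam hx).sub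
    ((hNd.log hN.ne').const_mul (η / Real.sqrt (lam ^ 2 - η ^ 2)))).add
    ((((hasDerivAt_id x).sub_const η).log hd).const_mul (η / Real.sqrt (lam ^ 2 - η ^ 2)))
  refine HasDerivAt.congr_deriv (f := condensatePrimitive lam η) h ?_
  have hs1 : Real.sqrt (lam ^ 2 - x ^ 2) ^ 2 = lam ^ 2 - x ^ 2 := Real.sq_sqrt hx2.le
  have hS1 : Real.sqrt (lam ^ 2 - η ^ 2) ^ 2 = lam ^ 2 - η ^ 2 := Real.sq_sqrt hη2.le
  have hs0 := Real.sqrt_pos.mpr hx2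
  have hS0 := Real.sqrt_pos.mpr hη2
  simp only [id]
  generalize Real.sqrt (lam ^ 2 - x ^ 2) = s at *
  generalize Real.sqrt (lam ^ 2 - η ^ 2) = S at *
  have key : (-(η * 1) + S * (-(2 * x) / (2 * s))) / (lam ^ 2 - η * x + S * s) =
      1 / (x - η) - S / ((x - η) * s) := by
    rw [div_eq_iff hN.ne']
    field_simp
    linear_combination (-S) * hs1 + s * hS1
  rw [key]
  field_simp
  ring

lemma continuousOn_condensateRegular {lam η : ℝ} (hη : η ∈ Set.Ioo (-lam) lam) :
    ContinuousOn (condensateRegular lam η) (Set.Icc (-lam) lam) := by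
  unfold condensateRegular
  refine ContinuousOn.sub ?_ (continuousOn_const.mul (ContinuousOn.log ?_ ?_))
  · exact (Real.continuous_arcsin.comp (continuous_id.div_const lam)).continuousOn
  · fun_prop
  · exact fun x hx => (condensate_log_arg_pos hη hx).ne'

lemma integral_eq_condensatePrimitive {lam η a b : ℝ} (hlam : 0 < lam)
    (hη : η ∈ Set.Ioo (-lam) lam) (hab : a ≤ b) (ha : -lam ≤ a) (hb : b ≤ lam)
    (hne : ∀ x ∈ Set.Icc a b, x ≠ η) :
    ∫ μ in a..b, μ / ((μ - η) * Real.sqrt (lam ^ 2 - μ ^ 2)) =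
      condensatePrimitive lam η b - condensatePrimitive lam η a := by
  have hsub : Set.Icc a b ⊆ Set.Icc (-lam) lam := Set.Icc_subset_Icc ha hb
  have hsub' : Set.Ioo a b ⊆ Set.Ioo (-lam) lam := Set.Ioo_subset_Ioo ha hb
  refine intervalIntegral.integral_eq_sub_of_hasDerivAt_of_le hab ?_ (fun x hx =>
    hasDerivAt_condensatePrimitive hlam hη (hsub' hx) (hne x (Set.Ioo_subset_Icc_self hx))) ?_
  · unfold condensatePrimitive
    refine ((continuousOn_condensateRegular hη).mono hsub).add
      (continuousOn_const.mul (ContinuousOn.log (by fun_prop) ?_))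
    exact fun x hx => sub_ne_zero.mpr (hne x hx)
  · -- `1 / √(λ² - μ²)` is a nonnegative derivative of a continuous function, hence integrable;
    -- the remaining factor `μ / (μ - η)` is continuous.
    have h1 : IntervalIntegrable (fun μ => 1 / Real.sqrt (lam ^ 2 - μ ^ 2))
        MeasureTheory.volume a b := by
      refine intervalIntegral.intervalIntegrable_deriv_of_nonneg
        (g := fun y => Real.arcsin (y / lam)) ?_ ?_ ?_
      · exact (Real.continuous_arcsin.comp (continuous_id.div_const lam)).continuousOn
      · intro x hx
        rw [min_eq_left hab, max_eq_right hab] at hx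
        exact hasDerivAt_arcsin_div hlam (hsub' hx)
      · intro x _
        positivity
    have h2 : ContinuousOn (fun μ => μ / (μ - η)) (Set.uIcc a b) := by
      rw [Set.uIcc_of_le hab]
      exact ContinuousOn.div (by fun_prop) (by fun_prop)
        fun x hx => sub_ne_zero.mpr (hne x hx)
    refine (h1.mul_continuousOn h2).congr fun x _ => ?_
    rw [div_mul_div_comm, one_mul, mul_comm (Real.sqrt _)]

/-- The logarithmic parts agree at the two endpoints, so only the `arcsin` contributes. -/
lemma condensatePrimitive_endpoints {lam η : ℝ} (hlam : 0 < lam)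
    (hη : η ∈ Set.Ioo (-lam) lam) :
    condensatePrimitive lam η lam - condensatePrimitive lam η (-lam) = Real.pi := by
  obtain ⟨h1, h2⟩ := hη
  have e1 : Real.log (lam ^ 2 - η * lam) = Real.log lam + Real.log (lam - η) := by
    rw [← Real.log_mul hlam.ne' (by linarith)]; congr 1; ring
  have e2 : Real.log (lam ^ 2 + η * lam) = Real.log lam + Real.log (-lam - η) := by
    rw [← Real.log_neg_eq_log (-lam - η), ← Real.log_mul hlam.ne' (by linarith)]; congr 1; ring
  simp only [condensatePrimitive, condensateRegular, neg_div, div_self hlam.ne', neg_sq, sub_self,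
    Real.sqrt_zero, mul_zero, add_zero, mul_neg, sub_neg_eq_add, e1, e2, Real.arcsin_neg,
    Real.arcsin_one]
  ring

/-- Finite Hilbert transform of the odd extension of the genus-0 condensate DOS:
the principal-value integral of `μ/((μ-η)√(λ²-μ²))` over `(-λ, λ)` equals `π`. -/
theorem genus0_condensate_FHT_u (lam η : ℝ) (hlam : 0 < lam)
    (hη : η ∈ Set.Ioo (-lam) lam) :
    Filter.Tendsto
      (fun ε : ℝ =>
        (∫ μ in (-lam)..(η - ε), μ / ((μ - η) * Real.sqrt (lam ^ 2 - μ ^ 2))) +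
        ∫ μ in (η + ε)..lam, μ / ((μ - η) * Real.sqrt (lam ^ 2 - μ ^ 2)))
      (nhdsWithin 0 (Set.Ioi 0)) (nhds Real.pi) := by
  have hc : ContinuousAt (condensateRegular lam η) η :=
    (continuousOn_condensateRegular hη).continuousAt (Icc_mem_nhds hη.1 hη.2)
  have hlim : Filter.Tendsto (fun ε : ℝ => Real.pi +
      (condensateRegular lam η (η - ε) - condensateRegular lam η (η + ε)))
      (nhdsWithin 0 (Set.Ioi 0)) (nhds Real.pi) := by
    have t1 : Filter.Tendsto (fun ε : ℝ => η - ε) (nhds 0) (nhds η) := by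
      simpa using (by fun_prop : Continuous fun ε : ℝ => η - ε).tendsto 0
    have t2 : Filter.Tendsto (fun ε : ℝ => η + ε) (nhds 0) (nhds η) := by
      simpa using (by fun_prop : Continuous fun ε : ℝ => η + ε).tendsto 0
    have h := ((hc.tendsto.comp t1).sub (hc.tendsto.comp t2)).const_add Real.pi
    rw [sub_self, add_zero] at h
    exact h.mono_left nhdsWithin_le_nhds
  refine hlim.congr' ?_
  have hδ : 0 < min (lam - η) (η + lam) :=
    lt_min (by linarith [hη.2]) (by linarith [hη.1])
  filter_upwards [Ioo_mem_nhdsGT hδ] with ε hε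
  have hε0 : 0 < ε := hε.1
  have hε1 : ε < lam - η := hε.2.trans_le (min_le_left _ _)
  have hε2 : ε < η + lam := hε.2.trans_le (min_le_right _ _)
  rw [integral_eq_condensatePrimitive hlam hη (by linarith) le_rfl (by linarith [hη.2])
      (fun x hx => by have := hx.2; exact ne_of_lt (by linarith)),
    integral_eq_condensatePrimitive hlam hη (by linarith) (by linarith [hη.1]) le_rfl
      (fun x hx => by have := hx.1; exact ne_of_gt (by linarith)),
    ← condensatePrimitive_endpoints hlam hη]
  have e1 : condensatePrimitive lam η (η - ε) = condensateRegular lam η (η - ε) +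
      η / Real.sqrt (lam ^ 2 - η ^ 2) * Real.log ε := by
    rw [condensatePrimitive, show η - ε - η = -ε by ring, Real.log_neg_eq_log]
  have e2 : condensatePrimitive lam η (η + ε) = condensateRegular lam η (η + ε) +
      η / Real.sqrt (lam ^ 2 - η ^ 2) * Real.log ε := by
    rw [condensatePrimitive, add_sub_cancel_left]
  rw [e1, e2]
  ring
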